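/- Suppose G is a locally finite bipartite Borel graph on a Polish space X with bipartition {B₀, B₁}, and suppose that for some ε > 0 and some function f : ℕ → ℕ with f(n) ≥ 8 for all n and Σₙ 8/f(n) < ε, the following hold: G satisfies Hall_{ε,1}, and X can be written as a union X = ⋃ₙ Aₙ of Borel sets Aₙ such that distinct points of Aₙ have G-distance greater than f(n). Then G has a Borel perfect matching. -/

import Mathlib

/-- `N_G(F)`: the set of neighbors of points of `F` that are not contained in `F`. -/
def graphNbhd {X : Type*} (G : SimpleGraph X) (F : Set X) : Set X :=
  {y | y ∉ F ∧ ∃ x ∈ F, G.Adj x y}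

/-- `M` is a perfect matching of `G`: a symmetric Borel set of (ordered) pairs of adjacent
vertices such that every vertex is matched to exactly one vertex. -/
def IsPerfectMatchingRel {X : Type*} (G : SimpleGraph X) (M : Set (X × X)) : Prop :=
  (∀ p ∈ M, G.Adj p.1 p.2) ∧
  (∀ x y : X, (x, y) ∈ M ↔ (y, x) ∈ M) ∧
  (∀ x : X, ∃! y : X, (x, y) ∈ M)

/-!
Process the sets `Aₙ` in order of increasing sparsity. At each stage match every remaining vertex
`x` of the current set along a measurably chosen edge whose removal, on its own, preserves Hall's
condition. To see that removing all these edges together is harmless, it is enough to look at a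
finite set `F` that is connected through common neighbors. The points that the neighborhood of `F`
loses are far apart, and around each of them lie at least `min r |F|` points of `F`, where `4 * r`
is the sparsity of the current set. If `|F| < r`, at most one point is lost, so Hall's condition
survives by the choice of the edge. If `|F| ≥ r`, at most `|F| / r` points are lost, which lowers
the expansion constant by `1 / r`; the sum of these losses over all stages is at most `ε`.
-/

section

open Finset

variable {X : Type*} {G : SimpleGraph X}

section EdistSeparated

theorem lt_edist_iff_forall_walk {n : ℕ} {x y : X} :
    (n : ℕ∞) < G.edist x y ↔ ∀ p : G.Walk x y, n < p.length := by
  refine ⟨fun h p => by exact_mod_cast h.trans_le p.edist_le, fun h => ?_⟩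
  by_cases htop : G.edist x y = ⊤
  · exact htop ▸ ENat.natCast_lt_top n
  · obtain ⟨p, hp⟩ := G.exists_walk_of_edist_ne_top htop
    exact hp ▸ by exact_mod_cast h p

/-- Distinct points of `A` are at graph distance greater than `k`. Extended distances are used so
that points in different components count as far apart. -/
def EdistSeparated (G : SimpleGraph X) (k : ℕ) (A : Set X) : Prop :=
  A.Pairwise fun x y => (k : ℕ∞) < G.edist x y

variable {k l : ℕ} {A B : Set X}

theorem edistSeparated_iff_forall_walk :
    EdistSeparated G k A ↔ ∀ x ∈ A, ∀ y ∈ A, x ≠ y → ∀ p : G.Walk x y, k < p.length := by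
  simp only [EdistSeparated, Set.Pairwise, lt_edist_iff_forall_walk]

theorem EdistSeparated.mono (h : EdistSeparated G k A) (hlk : l ≤ k) (hBA : B ⊆ A) :
    EdistSeparated G l B :=
  (h.imp fun _ _ hxy => (Nat.cast_le.2 hlk).trans_lt hxy).mono hBA

theorem EdistSeparated.eq_of_adj_adj (h : EdistSeparated G k A) (hk : 2 ≤ k) {x a b : X}
    (ha : a ∈ A) (hb : b ∈ A) (hxa : G.Adj x a) (hxb : G.Adj x b) : a = b := by
  by_contra hab
  have hempty := (SimpleGraph.two_lt_edist_iff.1 (h.mono hk subset_rfl ha hb hab)).2.2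
  exact hempty.subset (G.mem_commonNeighbors.2 ⟨hxa.symm, hxb.symm⟩)

theorem EdistSeparated.not_adj (h : EdistSeparated G k A) (hk : 1 ≤ k) {a b : X}
    (ha : a ∈ A) (hb : b ∈ A) : ¬ G.Adj a b := fun hab =>
  ((h.mono hk subset_rfl ha hb hab.ne).trans_eq (G.edist_eq_one_iff_adj.2 hab)).false

theorem EdistSeparated.of_subset_union_image {D R : Set X} {y : X → X}
    (hD : EdistSeparated G (k + 2) D) (hadj : ∀ x ∈ D, G.Adj x (y x)) (hRD : R ⊆ D ∪ y '' D)
    (hR : ∀ a ∈ R, ∀ b ∈ R, ¬ G.Adj a b) : EdistSeparated G k R := by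
  have hbase : ∀ a ∈ R, ∃ x ∈ D, (a = x ∨ a = y x) := by
    intro a ha
    rcases hRD ha with haD | ⟨x, hx, rfl⟩
    exacts [⟨a, haD, .inl rfl⟩, ⟨x, hx, .inr rfl⟩]
  have hnear : ∀ {x a}, x ∈ D → (a = x ∨ a = y x) → G.edist x a ≤ 1 := by
    rintro x a hx (rfl | rfl)
    exacts [by simp, (G.edist_eq_one_iff_adj.2 (hadj x hx)).le]
  intro a ha b hb hab
  obtain ⟨x, hx, hxa⟩ := hbase a ha
  obtain ⟨z, hz, hzb⟩ := hbase b hb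
  have hxz : x ≠ z := by
    rintro rfl
    have := hadj x hx
    rcases hxa with rfl | rfl <;> rcases hzb with rfl | rfl
    exacts [hab rfl, hR _ ha _ hb this, hR _ ha _ hb this.symm, hab rfl]
  by_contra! hle
  have : G.edist x z ≤ 1 + (k + 1) :=
    calc G.edist x z ≤ G.edist x a + G.edist a z := G.edist_triangle
      _ ≤ G.edist x a + (G.edist a b + G.edist z b) := by
        gcongr; exact G.edist_triangle.trans_eq (by rw [G.edist_comm (u := b)])
      _ ≤ 1 + (k + 1) := by gcongr <;> [exact hnear hx hxa; exact hnear hz hzb]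
  exact absurd (hD hx hz hxz) (not_lt.2 (this.trans_eq (by push_cast; ring)))

end EdistSeparated

section IsLinked

variable {F : Finset X} {B₀ B₁ : Set X}

/-- `F` is connected in the graph joining two vertices with a common neighbor: every proper
nonempty subset of `F` can be left in one step. -/
def IsLinked (G : SimpleGraph X) (F : Finset X) : Prop :=
  ∀ S ⊂ F, S.Nonempty → ∃ s ∈ S, ∃ t ∈ F, t ∉ S ∧ (G.commonNeighbors s t).Nonempty

theorem IsLinked.subset_of_mem (hF : IsLinked G F) (hG : G.IsBipartiteWith B₀ B₁) {z : X}
    (hzF : z ∈ F) (hz : z ∈ B₀) : ↑F ⊆ B₀ := by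
  classical
  by_contra hne
  obtain ⟨t, ht, htB⟩ := Set.not_subset.1 hne
  obtain ⟨s, hs, t, htF, htS, w, hsw, htw⟩ := hF {x ∈ F | x ∈ B₀}
    (filter_ssubset.2 ⟨t, ht, htB⟩) ⟨z, mem_filter.2 ⟨hzF, hz⟩⟩
  have hw : w ∈ B₁ := hG.mem_of_mem_adj (mem_filter.1 hs).2 hsw
  exact htS (mem_filter.2 ⟨htF, hG.symm.mem_of_mem_adj hw (G.adj_symm htw)⟩)

theorem IsLinked.subset_or_subset (hF : IsLinked G F) (hG : G.IsBipartiteWith B₀ B₁)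
    (hcover : B₀ ∪ B₁ = Set.univ) : ↑F ⊆ B₀ ∨ ↑F ⊆ B₁ := by
  obtain rfl | ⟨z, hz⟩ := F.eq_empty_or_nonempty
  · exact .inl (by simp)
  · exact ((Set.eq_univ_iff_forall.1 hcover) z).imp (hF.subset_of_mem hG hz)
      (hF.subset_of_mem hG.symm hz)

open scoped Classical in
theorem IsLinked.min_le_card_filter_edist_le (hF : IsLinked G F) {z : X} (hz : z ∈ F) (k : ℕ) :
    min (k + 1) #F ≤ #{b ∈ F | G.edist z b ≤ (2 * k : ℕ)} := by
  induction k with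
  | zero =>
    have : 0 < #{b ∈ F | G.edist z b ≤ (2 * 0 : ℕ)} :=
      card_pos.2 ⟨z, mem_filter.2 ⟨hz, by simp⟩⟩
    omega
  | succ k ih =>
    set S := {b ∈ F | G.edist z b ≤ (2 * k : ℕ)} with hS
    have hSF : S ⊆ F := filter_subset _ _
    have hmono : S ⊆ {b ∈ F | G.edist z b ≤ (2 * (k + 1) : ℕ)} :=
      monotone_filter_right _ fun b _ hb => hb.trans (by gcongr; omega)
    obtain hSF | hSF := hSF.eq_or_ssubset
    · exact (min_le_right _ _).trans ((congrArg card hSF).ge.trans (card_le_card hmono))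
    · obtain ⟨s, hs, t, htF, htS, w, hsw, htw⟩ := hF S hSF ⟨z, by simp [hS, hz]⟩
      have hzt : G.edist z t ≤ (2 * (k + 1) : ℕ) :=
        calc G.edist z t ≤ G.edist z s + (G.edist s w + G.edist w t) :=
              G.edist_triangle.trans (by gcongr; exact G.edist_triangle)
          _ ≤ (2 * k : ℕ) + (1 + 1) := by
              gcongr
              · exact (mem_filter.1 hs).2
              · exact (G.edist_eq_one_iff_adj.2 hsw).le
              · exact (G.edist_eq_one_iff_adj.2 (G.adj_symm htw)).le
          _ = (2 * (k + 1) : ℕ) := by push_cast; ring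
      calc min (k + 1 + 1) #F ≤ #S + 1 := by omega
        _ = #(insert t S) := (card_insert_of_notMem htS).symm
        _ ≤ _ := card_le_card (insert_subset (mem_filter.2 ⟨htF, hzt⟩) hmono)

end IsLinked

section Hall

variable [G.LocallyFinite] {V W B₀ B₁ : Set X} {F S : Finset X}

open scoped Classical in
/-- The neighbors of points of `F` that lie in `V`. Unlike in `graphNbhd`, points of `F` are not
excluded; the two agree when `F` lies on one side of a bipartition. -/
noncomputable def nbhdIn (G : SimpleGraph X) [G.LocallyFinite] (V : Set X) (F : Finset X) :
    Finset X :=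
  {y ∈ F.biUnion fun x => G.neighborFinset x | y ∈ V}

theorem mem_nbhdIn {y : X} : y ∈ nbhdIn G V F ↔ (∃ x ∈ F, G.Adj x y) ∧ y ∈ V := by
  simp [nbhdIn]

theorem nbhdIn_mono (hVW : V ⊆ W) (hSF : S ⊆ F) : nbhdIn G V S ⊆ nbhdIn G W F := fun _ h =>
  let ⟨⟨x, hx, hxy⟩, hV⟩ := mem_nbhdIn.1 h
  mem_nbhdIn.2 ⟨⟨x, hSF hx, hxy⟩, hVW hV⟩

/-- Hall's condition for the subgraph of `G` induced on `V`. -/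
def HallOn (G : SimpleGraph X) [G.LocallyFinite] (V : Set X) : Prop :=
  ∀ F : Finset X, ↑F ⊆ V → #F ≤ #(nbhdIn G V F)

open scoped Classical in
theorem card_nbhdIn_add_card_nbhdIn_sdiff_le (hSF : S ⊆ F)
    (hsep : ∀ s ∈ S, ∀ t ∈ F, t ∉ S → ¬ (G.commonNeighbors s t).Nonempty) :
    #(nbhdIn G V S) + #(nbhdIn G V (F \ S)) ≤ #(nbhdIn G V F) := by
  have hdisj : Disjoint (nbhdIn G V S) (nbhdIn G V (F \ S)) := by
    refine Finset.disjoint_left.2 fun z hzS hzF => ?_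
    obtain ⟨⟨s, hs, hsz⟩, -⟩ := mem_nbhdIn.1 hzS
    obtain ⟨⟨t, ht, htz⟩, -⟩ := mem_nbhdIn.1 hzF
    obtain ⟨htF, htS⟩ := mem_sdiff.1 ht
    exact hsep s hs t htF htS ⟨z, hsz, htz⟩
  rw [← card_union_of_disjoint hdisj]
  exact card_le_card (union_subset (nbhdIn_mono subset_rfl hSF)
    (nbhdIn_mono subset_rfl sdiff_subset))

theorem hallOn_of_isLinked
    (h : ∀ F : Finset X, ↑F ⊆ V → IsLinked G F → #F ≤ #(nbhdIn G V F)) : HallOn G V := by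
  classical
  intro F
  induction F using Finset.strongInduction with
  | H F ih =>
    intro hFV
    by_cases hF : IsLinked G F
    · exact h F hFV hF
    · simp only [IsLinked] at hF
      push Not at hF
      obtain ⟨S, hSF, hS, hsep⟩ := hF
      calc #F = #S + #(F \ S) := by
            rw [add_comm, card_sdiff_add_card_eq_card hSF.subset]
        _ ≤ #(nbhdIn G V S) + #(nbhdIn G V (F \ S)) := by
            refine Nat.add_le_add ?_ ?_
            exacts [ih S hSF ((coe_subset.2 hSF.subset).trans hFV),
              ih _ (sdiff_ssubset hSF.subset hS) ((coe_subset.2 sdiff_subset).trans hFV)]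
        _ ≤ #(nbhdIn G V F) := card_nbhdIn_add_card_nbhdIn_sdiff_le hSF.subset
            fun s hs t ht hts => Set.not_nonempty_iff_eq_empty.2 (hsep s hs t ht hts)

theorem not_adj_of_mem_nbhdIn (hG : G.IsBipartiteWith B₀ B₁) (hF : ↑F ⊆ B₀) {a b : X}
    (ha : a ∈ nbhdIn G V F) (hb : b ∈ nbhdIn G V F) : ¬ G.Adj a b := by
  obtain ⟨⟨s, hs, hsa⟩, -⟩ := mem_nbhdIn.1 ha
  obtain ⟨⟨t, ht, htb⟩, -⟩ := mem_nbhdIn.1 hb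
  exact fun hab => hG.disjoint.notMem_of_mem_left
    (hG.symm.mem_of_mem_adj (hG.mem_of_mem_adj (hF hs) hsa) hab)
    (hG.mem_of_mem_adj (hF ht) htb)

theorem coe_nbhdIn_univ_eq_graphNbhd (hG : G.IsBipartiteWith B₀ B₁) (hF : ↑F ⊆ B₀) :
    (nbhdIn G Set.univ F : Set X) = graphNbhd G F := by
  ext y
  simp only [mem_coe, mem_nbhdIn, Set.mem_univ, and_true, graphNbhd, Set.mem_ofPred_eq,
    iff_and_self]
  rintro ⟨x, hx, hxy⟩ hy
  exact hG.disjoint.notMem_of_mem_left (hF hy) (hG.mem_of_mem_adj (hF hx) hxy)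

/-- The balls of radius `2k + 1` around the points of `R` are disjoint, and each contains at least
`min (k + 1) #F` points of `F`. -/
theorem IsLinked.card_mul_min_le (hF : IsLinked G F) {k : ℕ} {R : Finset X}
    (hRF : R ⊆ nbhdIn G V F) (hR : EdistSeparated G (4 * k + 2) R) :
    #R * min (k + 1) #F ≤ #F := by
  classical
  let ball (p : X) : Finset X := {b ∈ F | G.edist p b ≤ (2 * k + 1 : ℕ)}
  have hball : ∀ p ∈ R, min (k + 1) #F ≤ #(ball p) := by
    intro p hp
    obtain ⟨⟨z, hz, hzp⟩, -⟩ := mem_nbhdIn.1 (hRF hp)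
    refine (hF.min_le_card_filter_edist_le hz k).trans (card_le_card ?_)
    refine monotone_filter_right _ fun b _ hb => ?_
    calc G.edist p b ≤ G.edist p z + G.edist z b := G.edist_triangle
      _ ≤ 1 + (2 * k : ℕ) := by gcongr; exact (G.edist_eq_one_iff_adj.2 hzp.symm).le
      _ = (2 * k + 1 : ℕ) := by push_cast; ring
  have hdisj : (R : Set X).PairwiseDisjoint ball := by
    refine fun p hp q hq hpq => Finset.disjoint_left.2 fun b hbp hbq => ?_
    refine (hR hp hq hpq).not_ge ?_
    calc G.edist p q ≤ G.edist p b + G.edist q b :=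
          G.edist_triangle.trans_eq (by rw [G.edist_comm (u := b)])
      _ ≤ (2 * k + 1 : ℕ) + (2 * k + 1 : ℕ) := by
          gcongr
          exacts [(mem_filter.1 hbp).2, (mem_filter.1 hbq).2]
      _ = (4 * k + 2 : ℕ) := by push_cast; ring
  calc #R * min (k + 1) #F ≤ ∑ p ∈ R, #(ball p) := card_nsmul_le_sum R _ _ hball
    _ = #(R.biUnion ball) := (card_biUnion hdisj).symm
    _ ≤ #F := card_le_card (biUnion_subset.2 fun p _ => filter_subset _ _)

/-- Linked subsets of `V` with at least `m` points expand by a factor `1 + δ` inside `V`. -/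
def ExpandsOn (G : SimpleGraph X) [G.LocallyFinite] (V : Set X) (δ : ℝ) (m : ℕ) : Prop :=
  ∀ F : Finset X, ↑F ⊆ V → IsLinked G F → m ≤ #F → (1 + δ) * #F ≤ #(nbhdIn G V F)

theorem ExpandsOn.mono {δ : ℝ} {m n : ℕ} (h : ExpandsOn G V δ m) (hmn : m ≤ n) :
    ExpandsOn G V δ n :=
  fun F hFV hF hn => h F hFV hF (hmn.trans hn)

/-- The edge `x y` lies in `V` and can be removed without destroying Hall's condition on `V`. -/
structure HallEdge (G : SimpleGraph X) [G.LocallyFinite] (V : Set X) (x y : X) : Prop where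
  mem : y ∈ V
  adj : G.Adj x y
  hall : HallOn G (V \ {x, y})

/-- What remains of `V` after each `x ∈ D` has been matched to `y x`. -/
def unmatched (V D : Set X) (y : X → X) : Set X := V \ (D ∪ y '' D)

section Stage

variable {D : Set X} {y : X → X} {r : ℕ}

open scoped Classical in
theorem coe_nbhdIn_sdiff_nbhdIn_unmatched_subset :
    ((nbhdIn G V F \ nbhdIn G (unmatched V D y) F : Finset X) : Set X) ⊆ D ∪ y '' D := by
  intro p hp
  obtain ⟨hpV, hpV'⟩ := mem_sdiff.1 hp
  rw [mem_nbhdIn] at hpV hpV'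
  by_contra hpD
  exact hpV' ⟨hpV.1, hpV.2, hpD⟩

open scoped Classical in
theorem IsLinked.card_sdiff_mul_min_le (hF : IsLinked G F) (hG : G.IsBipartiteWith B₀ B₁)
    (hcover : B₀ ∪ B₁ = Set.univ) (hr : r ≠ 0) (hD : EdistSeparated G (4 * r) D)
    (hadj : ∀ x ∈ D, G.Adj x (y x)) :
    #(nbhdIn G V F \ nbhdIn G (unmatched V D y) F) * min r #F ≤ #F := by
  obtain ⟨k, rfl⟩ := Nat.exists_eq_succ_of_ne_zero hr
  have hnotAdj : ∀ a ∈ nbhdIn G V F, ∀ b ∈ nbhdIn G V F, ¬ G.Adj a b := fun a ha b hb =>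
    (hF.subset_or_subset hG hcover).elim (not_adj_of_mem_nbhdIn hG · ha hb)
      (not_adj_of_mem_nbhdIn hG.symm · ha hb)
  exact hF.card_mul_min_le sdiff_subset <|
    EdistSeparated.of_subset_union_image (hD.mono (by omega) subset_rfl) hadj
      coe_nbhdIn_sdiff_nbhdIn_unmatched_subset
      fun a ha b hb => hnotAdj a (sdiff_subset ha) b (sdiff_subset hb)

open scoped Classical in
/-- At most one matched edge was removed from the neighborhood of `F`, and Hall's condition
survives the removal of that edge. -/
theorem card_le_card_nbhdIn_unmatched (hV : HallOn G V) (hFV : ↑F ⊆ unmatched V D y)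
    (hy : ∀ x ∈ D, HallEdge G V x (y x))
    (hone : #(nbhdIn G V F \ nbhdIn G (unmatched V D y) F) ≤ 1) :
    #F ≤ #(nbhdIn G (unmatched V D y) F) := by
  set R := nbhdIn G V F \ nbhdIn G (unmatched V D y) F
  obtain hempty | ⟨p, hp⟩ := R.eq_empty_or_nonempty
  · exact (hV F (hFV.trans Set.sdiff_subset)).trans
      (card_le_card (sdiff_eq_empty_iff_subset.1 hempty))
  obtain ⟨x, hx, hpx⟩ : ∃ x ∈ D, p ∈ ({x, y x} : Set X) := by
    rcases coe_nbhdIn_sdiff_nbhdIn_unmatched_subset hp with hpD | ⟨x, hx, rfl⟩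
    exacts [⟨p, hpD, by simp⟩, ⟨x, hx, by simp⟩]
  have hsub : unmatched V D y ⊆ V \ {x, y x} :=
    Set.sdiff_subset_sdiff_right (Set.insert_subset (.inl hx)
      (Set.singleton_subset_iff.2 (.inr ⟨x, hx, rfl⟩)))
  refine ((hy x hx).hall F (hFV.trans hsub)).trans (card_le_card fun w hw => ?_)
  by_contra hw'
  have hwR : w ∈ R := mem_sdiff.2 ⟨nbhdIn_mono Set.sdiff_subset subset_rfl hw, hw'⟩
  have hwp : w = p := card_le_one.1 hone w hwR p hp
  exact (mem_nbhdIn.1 hw).2.2 (hwp ▸ hpx)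

theorem expandsOn_unmatched {δ : ℝ} (hV : ExpandsOn G V δ r) (hG : G.IsBipartiteWith B₀ B₁)
    (hcover : B₀ ∪ B₁ = Set.univ) (hr : r ≠ 0) (hD : EdistSeparated G (4 * r) D)
    (hadj : ∀ x ∈ D, G.Adj x (y x)) :
    ExpandsOn G (unmatched V D y) (δ - (r : ℝ)⁻¹) r := by
  classical
  intro F hFV hF hrF
  set R := nbhdIn G V F \ nbhdIn G (unmatched V D y) F
  have hr0 : (0 : ℝ) < r := by positivity
  have hRF : (#R : ℝ) ≤ #F * (r : ℝ)⁻¹ := by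
    rw [← div_eq_mul_inv, le_div_iff₀ hr0]
    have := hF.card_sdiff_mul_min_le (V := V) hG hcover hr hD hadj
    rw [min_eq_left hrF] at this
    exact_mod_cast this
  have hsplit : (#(nbhdIn G V F) : ℝ) = #R + #(nbhdIn G (unmatched V D y) F) := by
    exact_mod_cast (card_sdiff_add_card_eq_card (nbhdIn_mono Set.sdiff_subset subset_rfl)).symm
  have hexp := hV F (hFV.trans Set.sdiff_subset) hF hrF
  linarith

theorem hallOn_unmatched {δ : ℝ} (hV : HallOn G V) (hexp : ExpandsOn G V δ r)
    (hδ : (r : ℝ)⁻¹ ≤ δ) (hG : G.IsBipartiteWith B₀ B₁) (hcover : B₀ ∪ B₁ = Set.univ)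
    (hr : r ≠ 0) (hD : EdistSeparated G (4 * r) D) (hy : ∀ x ∈ D, HallEdge G V x (y x)) :
    HallOn G (unmatched V D y) := by
  classical
  refine hallOn_of_isLinked fun F hFV hF => ?_
  obtain hrF | hFr := le_or_gt r #F
  · have hlarge := expandsOn_unmatched hexp hG hcover hr hD (fun x hx => (hy x hx).adj) F hFV hF hrF
    have : (1 : ℝ) * #F ≤ (1 + (δ - (r : ℝ)⁻¹)) * #F := by gcongr; linarith
    exact_mod_cast (one_mul (#F : ℝ) ▸ this.trans hlarge)
  · obtain rfl | hne := F.eq_empty_or_nonempty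
    · simp
    have hsmall := hF.card_sdiff_mul_min_le (V := V) hG hcover hr hD fun x hx => (hy x hx).adj
    rw [min_eq_right hFr.le] at hsmall
    exact card_le_card_nbhdIn_unmatched hV hFV hy
      (Nat.le_of_mul_le_mul_right (hsmall.trans_eq (one_mul _).symm) hne.card_pos)

end Stage

theorem HallOn.exists_involutive_adj (hV : HallOn G V) (hG : G.IsBipartiteWith B₀ B₁) :
    ∃ π : V → V, π.Involutive ∧ ∀ v : V, G.Adj v (π v) := by
  classical
  let : (G.induce V).LocallyFinite := fun v =>
    Fintype.ofInjective (fun w => (⟨w, w.2⟩ : G.neighborSet v)) fun w z h => by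
      simpa [Subtype.ext_iff] using h
  have hbip : (G.induce V).IsBipartiteWith ((↑) ⁻¹' B₀) ((↑) ⁻¹' B₁) :=
    ⟨hG.disjoint.preimage _, fun _ _ h => hG.mem_of_adj h⟩
  have hHall : ∀ s : Set V, s.ncard ≤ (⋃ x ∈ s, (G.induce V).neighborSet x).ncard := by
    intro s
    obtain hs | hs := s.finite_or_infinite
    swap
    · simp [hs.ncard]
    lift s to Finset V using hs
    have himage : ((↑) '' (⋃ x ∈ (s : Set V), (G.induce V).neighborSet x) : Set X) =
        nbhdIn G V (s.map (.subtype _)) := by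
      ext y
      simp only [Set.mem_image, Set.mem_iUnion, mem_coe, exists_prop, SimpleGraph.mem_neighborSet,
        SimpleGraph.comap_adj, Function.Embedding.subtype_apply, Subtype.exists, mem_nbhdIn,
        mem_map, exists_and_right, exists_eq_right, exists_eq_right_right]
      tauto
    rw [Set.ncard_coe_finset, ← Set.ncard_image_of_injective _ Subtype.val_injective, himage,
      Set.ncard_coe_finset, ← card_map (.subtype _)]
    exact hV _ (by simp)
  obtain ⟨M, hM⟩ := SimpleGraph.exists_isPerfectMatching_of_forall_ncard_le hbip hHall
  choose π hπ hunique using SimpleGraph.Subgraph.isPerfectMatching_iff.1 hM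
  exact ⟨π, fun v => (hunique _ v ((hπ v).symm)).symm, fun v => M.adj_sub (hπ v)⟩

theorem HallOn.exists_hallEdge (hV : HallOn G V) (hG : G.IsBipartiteWith B₀ B₁) {x : X}
    (hx : x ∈ V) : ∃ y, HallEdge G V x y := by
  obtain ⟨π, hπ, hadj⟩ := hV.exists_involutive_adj hG
  lift x to V using hx
  refine ⟨π x, (π x).2, hadj x, fun F hF => ?_⟩
  let partner : F → X := fun z => π ⟨z, (hF z.2).1⟩
  have hinj : Function.Injective partner := fun z w h =>
    Subtype.ext (Subtype.mk.inj (hπ.injective (Subtype.ext h)))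
  have hmem : ∀ z, partner z ∈ nbhdIn G (V \ {↑x, ↑(π x)}) F := by
    refine fun z => mem_nbhdIn.2 ⟨⟨z, z.2, hadj ⟨z, _⟩⟩, Subtype.property _, ?_⟩
    rintro (h | h)
    · exact (hF z.2).2 (.inr (congrArg Subtype.val (hπ.eq_iff.1 (Subtype.ext h))))
    · exact (hF z.2).2 (.inl (congrArg Subtype.val (hπ.injective (Subtype.ext h))))
  simpa using card_le_card_of_injOn partner (fun z _ => hmem z) (s := F.attach) hinj.injOn

section Locality

variable {C : Set X}

theorem HallOn.inter (hV : HallOn G V) (hC : ∀ ⦃a b⦄, a ∈ C → G.Adj a b → b ∈ C) :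
    HallOn G (V ∩ C) := by
  refine fun F hF => (hV F (hF.trans Set.inter_subset_left)).trans (card_le_card fun z hz => ?_)
  obtain ⟨⟨x, hx, hxz⟩, hzV⟩ := mem_nbhdIn.1 hz
  exact mem_nbhdIn.2 ⟨⟨x, hx, hxz⟩, hzV, hC (hF hx).2 hxz⟩

theorem hallOn_of_inter_of_sdiff (hC : ∀ ⦃a b⦄, a ∈ C → G.Adj a b → b ∈ C)
    (hin : HallOn G (V ∩ C)) (hout : HallOn G (V \ C)) : HallOn G V := by
  classical
  intro F hFV
  set S := {x ∈ F | x ∈ C}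
  have hSF : S ⊆ F := filter_subset _ _
  have hsep : ∀ s ∈ S, ∀ t ∈ F, t ∉ S → ¬ (G.commonNeighbors s t).Nonempty := by
    rintro s hs t ht htS ⟨z, hsz, htz⟩
    exact htS (mem_filter.2 ⟨ht, hC (hC (mem_filter.1 hs).2 hsz) (G.adj_symm htz)⟩)
  have hSV : ↑S ⊆ V ∩ C := fun x hx => ⟨hFV (hSF hx), (mem_filter.1 hx).2⟩
  have hSV' : ↑(F \ S) ⊆ V \ C := fun x hx =>
    ⟨hFV (sdiff_subset hx), fun hxC => (mem_sdiff.1 hx).2 (mem_filter.2 ⟨sdiff_subset hx, hxC⟩)⟩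
  calc #F = #S + #(F \ S) := by rw [add_comm, card_sdiff_add_card_eq_card hSF]
    _ ≤ #(nbhdIn G (V ∩ C) S) + #(nbhdIn G (V \ C) (F \ S)) :=
        Nat.add_le_add (hin S hSV) (hout _ hSV')
    _ ≤ #(nbhdIn G V S) + #(nbhdIn G V (F \ S)) :=
        Nat.add_le_add (card_le_card (nbhdIn_mono Set.inter_subset_left subset_rfl))
          (card_le_card (nbhdIn_mono Set.sdiff_subset subset_rfl))
    _ ≤ #(nbhdIn G V F) := card_nbhdIn_add_card_nbhdIn_sdiff_le hSF hsep

theorem HallOn.sdiff_pair_iff (hV : HallOn G V) (hC : ∀ ⦃a b⦄, a ∈ C → G.Adj a b → b ∈ C)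
    {x y : X} (hx : x ∈ C) (hy : y ∈ C) :
    HallOn G (V \ {x, y}) ↔ HallOn G (V \ {x, y} ∩ C) := by
  refine ⟨fun h => h.inter hC, fun h => hallOn_of_inter_of_sdiff hC h ?_⟩
  have hcompl : ∀ ⦃a b⦄, a ∈ Cᶜ → G.Adj a b → b ∈ Cᶜ := fun a b ha hab hb => ha (hC hb hab.symm)
  have hoff : (V \ {x, y}) \ C = V ∩ Cᶜ := by
    rw [Set.sdiff_sdiff, Set.union_eq_self_of_subset_left (Set.pair_subset hx hy), Set.sdiff_eq]
  exact hoff ▸ hV.inter hcompl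

theorem hallOn_inter_range_iff {ι : Type*} {e : ι → X} :
    HallOn G (V ∩ Set.range e) ↔ ∀ I : Finset ι, Set.InjOn e I → (∀ i ∈ I, e i ∈ V) →
      ∃ J : Finset ι, #I ≤ #J ∧ Set.InjOn e J ∧
        ∀ j ∈ J, e j ∈ V ∧ ∃ i ∈ I, G.Adj (e i) (e j) := by
  classical
  refine ⟨fun h I hI hIV => ?_, fun h F hF => ?_⟩
  · have hsurj : Set.SurjOn e Set.univ (nbhdIn G (V ∩ Set.range e) (I.image e)) := fun z hz => by
      simpa using (mem_nbhdIn.1 hz).2.2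
    obtain ⟨J, -, hJ, hJN⟩ := exists_subset_injOn_image_eq_of_surjOn _ _ hsurj
    have hle := h (I.image e) (by simpa [Set.subset_def] using hIV)
    rw [← hJN, card_image_of_injOn hI, card_image_of_injOn hJ] at hle
    refine ⟨J, hle, hJ, fun j hj => ?_⟩
    have := mem_nbhdIn.1 (hJN ▸ mem_image_of_mem e hj)
    simpa [and_comm] using this
  · have hsurj : Set.SurjOn e Set.univ F := fun z hz => by simpa using (hF hz).2
    obtain ⟨I, -, hI, rfl⟩ := exists_subset_injOn_image_eq_of_surjOn _ _ hsurj
    obtain ⟨J, hIJ, hJ, hJN⟩ := h I hI fun i hi => (hF (mem_image_of_mem e hi)).1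
    rw [card_image_of_injOn hI]
    refine hIJ.trans ((card_image_of_injOn hJ).ge.trans (card_le_card ?_))
    refine image_subset_iff.2 fun j hj => ?_
    obtain ⟨hjV, i, hi, hij⟩ := hJN j hj
    exact mem_nbhdIn.2 ⟨⟨e i, mem_image_of_mem e hi, hij⟩, hjV, j, rfl⟩

end Locality

end Hall

section Borel

variable [MeasurableSpace X]

theorem exists_measurable_component_cover {g : ℕ → X → X} (hg : ∀ n, Measurable (g n))
    (hadj : ∀ ⦃x y⦄, G.Adj x y → ∃ n, g n x = y) :
    ∃ e : List ℕ → X → X, (∀ w, Measurable (e w)) ∧ (∀ x, x ∈ Set.range (e · x)) ∧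
      ∀ x ⦃a b⦄, a ∈ Set.range (e · x) → G.Adj a b → b ∈ Set.range (e · x) := by
  refine ⟨fun w x => w.foldl (fun z n => g n z) x, fun w => ?_, fun x => ⟨[], rfl⟩, ?_⟩
  · induction w using List.reverseRecOn with
    | nil => exact measurable_id
    | append_singleton w n ih => simpa [Function.comp_def] using (hg n).comp ih
  · rintro x _ b ⟨w, rfl⟩ hab
    obtain ⟨n, rfl⟩ := hadj hab
    exact ⟨w ++ [n], by simp⟩

variable [StandardBorelSpace X]

theorem exists_measurable_eq_snd_of_injOn_fst {Y : Type*} [MeasurableSpace Y]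
    [StandardBorelSpace Y] (hne : X → Nonempty Y)
    {E : Set (X × Y)} (hE : MeasurableSet E) (hinj : Set.InjOn Prod.fst E) :
    ∃ g : X → Y, Measurable g ∧ ∀ p ∈ E, g p.1 = p.2 := by
  have := hE.standardBorel
  have hfst : MeasurableEmbedding fun p : E => p.1.1 :=
    (measurable_fst.comp measurable_subtype_coe).measurableEmbedding hinj.injective
  obtain ⟨g, hg, hgE⟩ := hfst.exists_measurable_extend
    (measurable_snd.comp measurable_subtype_coe) hne
  exact ⟨g, hg, fun p hp => congrFun hgE ⟨p, hp⟩⟩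

theorem exists_measurable_neighbor_enumeration (hG : MeasurableSet {p : X × X | G.Adj p.1 p.2})
    {A : ℕ → Set X} (hA : ∀ n, MeasurableSet (A n)) (hcover : ⋃ n, A n = Set.univ)
    (hsep : ∀ n, EdistSeparated G 2 (A n)) :
    ∃ g : ℕ → X → X, (∀ n, Measurable (g n)) ∧ ∀ ⦃x y⦄, G.Adj x y → ∃ n, g n x = y := by
  have hbranch : ∀ n, ∃ g : X → X, Measurable g ∧
      ∀ p ∈ {p : X × X | G.Adj p.1 p.2 ∧ p.2 ∈ A n}, g p.1 = p.2 := by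
    refine fun n => exists_measurable_eq_snd_of_injOn_fst (fun x => ⟨x⟩)
      (hG.inter (measurable_snd (hA n))) ?_
    rintro ⟨x, a⟩ ⟨hxa, ha⟩ ⟨x', b⟩ ⟨hxb, hb⟩ (rfl : x = x')
    exact Prod.ext rfl ((hsep n).eq_of_adj_adj le_rfl ha hb hxa hxb)
  choose g hg hgA using hbranch
  refine ⟨g, hg, fun x y hxy => ?_⟩
  obtain ⟨n, hn⟩ := Set.mem_iUnion.1 (hcover ▸ Set.mem_univ y)
  exact ⟨n, hgA n (x, y) ⟨hxy, hn⟩⟩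

variable [G.LocallyFinite] {V : Set X}

theorem measurableSet_hallOn_inter_range {Y ι : Type*} [MeasurableSpace Y] [Countable ι]
    (hG : MeasurableSet {p : X × X | G.Adj p.1 p.2}) {e : ι → Y → X} (he : ∀ i, Measurable (e i))
    {W : Y → Set X} (hW : MeasurableSet {p : Y × X | p.2 ∈ W p.1}) :
    MeasurableSet {t | HallOn G (W t ∩ Set.range (e · t))} := by
  have hmem : ∀ i, Measurable fun t => e i t ∈ W t := fun i =>
    (measurable_id.prodMk (he i) hW).mem
  have hadj : ∀ i j, Measurable fun t => G.Adj (e i t) (e j t) := fun i j =>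
    ((he i).prodMk (he j) hG).mem
  have hinj : ∀ I : Finset ι, Measurable fun t => Set.InjOn (e · t) I := fun I =>
    .forall fun i => .imp measurable_const <| .forall fun j => .imp measurable_const <|
      .imp (measurableSet_eq_fun (he i) (he j)).mem measurable_const
  simp only [hallOn_inter_range_iff]
  refine measurableSet_setOfPred.2 (.forall fun I => .imp (hinj I) (.imp ?_ (.exists fun J => ?_)))
  · exact .forall fun i => .imp measurable_const (hmem i)
  · exact .and measurable_const <| .and (hinj J) <| .forall fun j => .imp measurable_const <|
      .and (hmem j) <| .exists fun i => .and measurable_const (hadj i j)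

theorem HallOn.measurableSet_hallEdge {ι : Type*} [Countable ι]
    (hG : MeasurableSet {p : X × X | G.Adj p.1 p.2}) {e : ι → X → X} (he : ∀ i, Measurable (e i))
    (hself : ∀ x, x ∈ Set.range (e · x))
    (hclosed : ∀ x ⦃a b⦄, a ∈ Set.range (e · x) → G.Adj a b → b ∈ Set.range (e · x))
    (hV : MeasurableSet V) (hHall : HallOn G V) {u : X → X} (hu : Measurable u) :
    MeasurableSet {x | HallEdge G V x (u x)} := by
  have hW : MeasurableSet {p : X × X | p.2 ∈ V \ {p.1, u p.1}} :=
    MeasurableSet.diff (measurable_snd hV)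
      ((measurableSet_eq_fun measurable_snd measurable_fst).union
        (measurableSet_eq_fun measurable_snd (hu.comp measurable_fst)))
  have hlocal : {x | HallEdge G V x (u x)} = {x | u x ∈ V} ∩ {x | G.Adj x (u x)} ∩
      {x | HallOn G (V \ {x, u x} ∩ Set.range (e · x))} := by
    ext x
    constructor
    · rintro ⟨hmem, hadj, hHall'⟩
      exact ⟨⟨hmem, hadj⟩, hHall'.inter (hclosed x)⟩
    · rintro ⟨⟨hmem, hadj⟩, hHall'⟩
      exact ⟨hmem, hadj, (hHall.sdiff_pair_iff (hclosed x) (hself x)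
        (hclosed x (hself x) hadj)).2 hHall'⟩
  rw [hlocal]
  exact ((hu hV).inter (measurable_id.prodMk hu hG)).inter
    (measurableSet_hallOn_inter_range hG he hW)

theorem HallOn.exists_measurable_hallEdge {B₀ B₁ : Set X} (hbip : G.IsBipartiteWith B₀ B₁)
    (hG : MeasurableSet {p : X × X | G.Adj p.1 p.2}) {g : ℕ → X → X}
    (hg : ∀ n, Measurable (g n)) (hadj : ∀ ⦃x y⦄, G.Adj x y → ∃ n, g n x = y)
    (hV : MeasurableSet V) (hHall : HallOn G V) :
    ∃ y : X → X, Measurable y ∧ ∀ x ∈ V, HallEdge G V x (y x) := by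
  classical
  obtain ⟨e, he, hself, hclosed⟩ := exists_measurable_component_cover hg hadj
  have hex : ∀ x, ∃ n, x ∈ Vᶜ ∪ {x | HallEdge G V x (g n x)} := fun x => by
    by_cases hx : x ∈ V
    · obtain ⟨y, hy⟩ := hHall.exists_hallEdge hbip hx
      obtain ⟨n, rfl⟩ := hadj hy.adj
      exact ⟨n, .inr hy⟩
    · exact ⟨0, .inl hx⟩
  have hfind : Measurable fun x => Nat.find (hex x) := measurable_find hex fun n =>
    hV.compl.union (hHall.measurableSet_hallEdge hG he hself hclosed hV (hg n))
  have heval : Measurable fun q : ℕ × X => g q.1 q.2 := measurable_from_prod_countable_right hg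
  exact ⟨fun x => g (Nat.find (hex x)) x, heval.comp (hfind.prodMk measurable_id),
    fun x hx => (Nat.find_spec (hex x)).resolve_left (not_not.2 hx)⟩

theorem measurableSet_unmatched {D : Set X} {y : X → X} (hV : MeasurableSet V)
    (hD : MeasurableSet D) (hy : Measurable y) (hinj : Set.InjOn y D) :
    MeasurableSet (unmatched V D y) :=
  hV.diff (hD.union (hD.image_of_measurable_injOn hy hinj))

end Borel

section StageMatching

variable {D : Set X} {y : X → X}

theorem EdistSeparated.injOn (hD : EdistSeparated G 2 D) (hadj : ∀ x ∈ D, G.Adj x (y x)) :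
    Set.InjOn y D := fun x hx z hz hxz =>
  hD.eq_of_adj_adj le_rfl hx hz (hadj x hx).symm (hxz ▸ (hadj z hz).symm)

/-- The edges `x (y x)` for `x ∈ D`, in both orientations. -/
def stageMatching (D : Set X) (y : X → X) : Set (X × X) :=
  {p | (p.1 ∈ D ∧ p.2 = y p.1) ∨ (p.2 ∈ D ∧ p.1 = y p.2)}

theorem measurableSet_stageMatching [MeasurableSpace X] [StandardBorelSpace X]
    (hD : MeasurableSet D) (hy : Measurable y) : MeasurableSet (stageMatching D y) :=
  ((measurable_fst hD).inter (measurableSet_eq_fun measurable_snd (hy.comp measurable_fst))).union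
    ((measurable_snd hD).inter (measurableSet_eq_fun measurable_fst (hy.comp measurable_snd)))

theorem mem_stageMatching_comm {x z : X} :
    (x, z) ∈ stageMatching D y ↔ (z, x) ∈ stageMatching D y := or_comm

theorem mem_union_image_of_mem_stageMatching {x z : X} (h : (x, z) ∈ stageMatching D y) :
    x ∈ D ∪ y '' D :=
  h.imp And.left fun ⟨hz, hx⟩ => ⟨z, hz, hx.symm⟩

theorem existsUnique_mem_stageMatching (hD : EdistSeparated G 2 D)
    (hadj : ∀ x ∈ D, G.Adj x (y x)) {x : X} (hx : x ∈ D ∪ y '' D) :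
    ∃! z, (x, z) ∈ stageMatching D y := by
  have hnot : ∀ z ∈ D, y z ∉ D := fun z hz hyz => hD.not_adj one_le_two hz hyz (hadj z hz)
  rcases hx with hx | ⟨x, hx, rfl⟩
  · refine ⟨y x, .inl ⟨hx, rfl⟩, ?_⟩
    rintro z (⟨-, hz⟩ | ⟨hz, hxz⟩)
    exacts [hz, absurd (hxz ▸ hx) (hnot z hz)]
  · refine ⟨x, .inr ⟨hx, rfl⟩, ?_⟩
    rintro z (⟨hyx, -⟩ | ⟨hz, hxz⟩)
    exacts [absurd hyx (hnot x hx), hD.injOn hadj hz hx hxz.symm]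

theorem isPerfectMatchingRel_iUnion_stageMatching {ι : Type*} {D : ι → Set X} {y : ι → X → X}
    (hD : ∀ n, EdistSeparated G 2 (D n)) (hadj : ∀ n, ∀ x ∈ D n, G.Adj x (y n x))
    (hpart : ∀ x, ∃! n, x ∈ D n ∪ y n '' D n) :
    IsPerfectMatchingRel G (⋃ n, stageMatching (D n) (y n)) := by
  refine ⟨fun p hp => ?_, fun x z => ?_, fun x => ?_⟩
  · obtain ⟨n, ⟨hn, h⟩ | ⟨hn, h⟩⟩ := Set.mem_iUnion.1 hp
    exacts [h ▸ hadj n _ hn, h ▸ (hadj n _ hn).symm]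
  · simp only [Set.mem_iUnion, mem_stageMatching_comm (x := x)]
  · obtain ⟨n, hn, hunique⟩ := hpart x
    obtain ⟨z, hz, hzunique⟩ := existsUnique_mem_stageMatching (hD n) (hadj n) hn
    refine ⟨z, Set.mem_iUnion.2 ⟨n, hz⟩, fun w hw => ?_⟩
    obtain ⟨m, hm⟩ := Set.mem_iUnion.1 hw
    exact hzunique w (hunique m (mem_union_image_of_mem_stageMatching hm) ▸ hm)

end StageMatching

theorem existsUnique_mem_of_sdiff_succ {V P : ℕ → Set X} (hzero : V 0 = Set.univ)
    (hsucc : ∀ n, V (n + 1) = V n \ P n) (hPV : ∀ n, P n ⊆ V n) {x : X} (hx : ∃ n, x ∉ V n) :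
    ∃! n, x ∈ P n := by
  have hanti : Antitone V := antitone_nat_of_succ_le fun n => hsucc n ▸ Set.sdiff_subset
  have hlt : ∀ {m n}, x ∈ P m → x ∈ P n → ¬ m < n := fun {m n} hm hn hmn =>
    (hsucc m ▸ hanti hmn (hPV n hn)).2 hm
  obtain ⟨n, hxn, hxn'⟩ : ∃ n, x ∈ V n ∧ x ∉ V (n + 1) := by
    by_contra! hstay
    obtain ⟨n, hn⟩ := hx
    exact hn (Nat.rec (hzero ▸ Set.mem_univ x) hstay n)
  have hPn : x ∈ P n := by
    by_contra hP
    exact hxn' (hsucc n ▸ ⟨hxn, hP⟩)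
  exact ⟨n, hPn, fun m hm => (not_lt.1 (hlt hPn hm)).antisymm (not_lt.1 (hlt hm hPn))⟩

/-- Breaking ties by index makes the rank of `n` among the values of `f` well defined, and the
ranks enumerate the rearrangement. -/
theorem exists_equiv_monotone_comp {α : Type*} [LinearOrder α] {f : ℕ → α}
    (hf : ∀ a, {n | f n ≤ a}.Finite) : ∃ σ : ℕ ≃ ℕ, Monotone (f ∘ σ) := by
  let key (n : ℕ) : α ×ₗ ℕ := toLex (f n, n)
  let rank (n : ℕ) : ℕ := {m | key m < key n}.ncard
  have hfin : ∀ n, {m | key m < key n}.Finite := fun n =>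
    (hf (f n)).subset fun m hm => Prod.Lex.monotone_fst (key m) (key n) (le_of_lt hm)
  have hrank : ∀ {m n}, key m < key n → rank m < rank n := fun {m n} hmn =>
    Set.ncard_lt_ncard ⟨fun l hl => lt_trans hl hmn, fun h => lt_irrefl (key m) (h hmn)⟩ (hfin n)
  have hinj : Function.Injective rank := fun m n hmn => by
    by_contra hne
    have hkey : key m ≠ key n := fun h => hne (congrArg (fun p => (ofLex p).2) h)
    exact hkey.lt_or_gt.elim (fun h => (hrank h).ne hmn) fun h => (hrank h).ne' hmn
  have := (Set.infinite_range_of_injective hinj).to_subtype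
  let e : ℕ ≃ Set.range rank := Equiv.ofInjective rank hinj
  let o : ℕ ≃o Set.range rank := Nat.Subtype.orderIsoOfNat _
  have hrank_apply : ∀ i, rank (e.symm (o i)) = o i := fun i =>
    Equiv.apply_ofInjective_symm hinj _
  refine ⟨o.toEquiv.trans e.symm, fun i j hij => ?_⟩
  by_contra! hlt
  have hlt' : rank (e.symm (o j)) < rank (e.symm (o i)) :=
    hrank (Prod.Lex.toLex_lt_toLex.2 (.inl hlt))
  rw [hrank_apply, hrank_apply] at hlt'
  exact hlt'.not_ge (o.monotone hij)

section Greedy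

variable [MeasurableSpace X] [G.LocallyFinite] {B₀ B₁ : Set X}

/-- The state of the construction before a stage that removes a set of sparsity `m`: the Borel set
`V` of unmatched vertices satisfies Hall's condition, and its linked subsets of size at least `m`
still expand by the factor `1 + δ`. -/
structure IsUnmatchedStage (G : SimpleGraph X) [G.LocallyFinite] (δ : ℝ) (m : ℕ) (V : Set X) :
    Prop where
  measurableSet : MeasurableSet V
  hallOn : HallOn G V
  expandsOn : ExpandsOn G V δ m

theorem isUnmatchedStage_univ (hG : G.IsBipartiteWith B₀ B₁) (hcover : B₀ ∪ B₁ = Set.univ)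
    {ε : ℝ} (hε : 0 ≤ ε) (m : ℕ)
    (hHall : ∀ F : Finset X, ((F : Set X) ⊆ B₀ ∨ (F : Set X) ⊆ B₁) →
      (1 + ε) * (F.card : ℝ) ≤ ((graphNbhd G (F : Set X)).ncard : ℝ)) :
    IsUnmatchedStage G ε m Set.univ := by
  have hexp : ∀ F : Finset X, IsLinked G F → (1 + ε) * #F ≤ #(nbhdIn G Set.univ F) := by
    intro F hF
    have hside := hF.subset_or_subset hG hcover
    have hcoe : (nbhdIn G Set.univ F : Set X) = graphNbhd G F :=
      hside.elim (coe_nbhdIn_univ_eq_graphNbhd hG) (coe_nbhdIn_univ_eq_graphNbhd hG.symm)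
    exact (hHall F hside).trans_eq (by rw [← hcoe, Set.ncard_coe_finset])
  refine ⟨.univ, hallOn_of_isLinked fun F _ hF => ?_, fun F _ hF _ => hexp F hF⟩
  have : (#F : ℝ) ≤ (1 + ε) * #F := le_mul_of_one_le_left (by positivity) (by linarith)
  exact_mod_cast this.trans (hexp F hF)

variable [StandardBorelSpace X]

theorem IsUnmatchedStage.exists_next (hbip : G.IsBipartiteWith B₀ B₁)
    (hcover : B₀ ∪ B₁ = Set.univ) (hG : MeasurableSet {p : X × X | G.Adj p.1 p.2})
    {g : ℕ → X → X} (hg : ∀ n, Measurable (g n)) (hadj : ∀ ⦃x y⦄, G.Adj x y → ∃ n, g n x = y)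
    {δ : ℝ} {r : ℕ} {V A : Set X} (hV : IsUnmatchedStage G δ r V) (hr : r ≠ 0)
    (hδ : (r : ℝ)⁻¹ ≤ δ) (hA : MeasurableSet A) (hsep : EdistSeparated G (4 * r) A) :
    ∃ y : X → X, Measurable y ∧ (∀ x ∈ V, HallEdge G V x (y x)) ∧
      IsUnmatchedStage G (δ - (r : ℝ)⁻¹) r (unmatched V (A ∩ V) y) := by
  obtain ⟨y, hy, hedge⟩ := hV.hallOn.exists_measurable_hallEdge hbip hG hg hadj hV.measurableSet
  have hedge' : ∀ x ∈ A ∩ V, HallEdge G V x (y x) := fun x hx => hedge x hx.2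
  have hD : EdistSeparated G (4 * r) (A ∩ V) := hsep.mono le_rfl Set.inter_subset_left
  refine ⟨y, hy, hedge, ?_, ?_, ?_⟩
  · exact measurableSet_unmatched hV.measurableSet (hA.inter hV.measurableSet) hy
      ((hD.mono (by omega) subset_rfl).injOn fun x hx => (hedge' x hx).adj)
  · exact hallOn_unmatched hV.hallOn hV.expandsOn hδ hbip hcover hr hD hedge'
  · exact expandsOn_unmatched hV.expandsOn hbip hcover hr hD fun x hx => (hedge' x hx).adj

theorem exists_greedy_sequence (hbip : G.IsBipartiteWith B₀ B₁)
    (hcover : B₀ ∪ B₁ = Set.univ) (hG : MeasurableSet {p : X × X | G.Adj p.1 p.2})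
    {r : ℕ → ℕ} (hr : ∀ n, r n ≠ 0) (hmono : Monotone r) {ε : ℝ}
    (hsum : ∀ n, ∑ i ∈ range n, (r i : ℝ)⁻¹ ≤ ε) (huniv : IsUnmatchedStage G ε (r 0) Set.univ)
    {A : ℕ → Set X} (hA : ∀ n, MeasurableSet (A n)) (hAcover : ⋃ n, A n = Set.univ)
    (hsep : ∀ n, EdistSeparated G (4 * r n) (A n)) :
    ∃ (V : ℕ → Set X) (y : ℕ → X → X), V 0 = Set.univ ∧
      (∀ n, V (n + 1) = unmatched (V n) (A n ∩ V n) (y n)) ∧ (∀ n, MeasurableSet (V n)) ∧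
      (∀ n, Measurable (y n)) ∧ ∀ n, ∀ x ∈ V n, HallEdge G (V n) x (y n x) := by
  obtain ⟨g, hg, hadj⟩ := exists_measurable_neighbor_enumeration hG hA hAcover fun n =>
    (hsep n).mono (by have := hr n; omega) subset_rfl
  let δ (n : ℕ) : ℝ := ε - ∑ i ∈ range n, (r i : ℝ)⁻¹
  have hδ : ∀ n, δ (n + 1) = δ n - (r n : ℝ)⁻¹ := fun n => by
    simp only [δ, sum_range_succ]; ring
  have hδ_ge : ∀ n, (r n : ℝ)⁻¹ ≤ δ n := fun n => by
    have := hsum (n + 1)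
    simp only [δ, sum_range_succ] at this ⊢
    linarith
  choose y hy hedge hnext using fun n (V : {V // IsUnmatchedStage G (δ n) (r n) V}) =>
    V.2.exists_next hbip hcover hG hg hadj (hr n) (hδ_ge n) (hA n) (hsep n)
  let V (n : ℕ) : {V // IsUnmatchedStage G (δ n) (r n) V} :=
    Nat.rec ⟨Set.univ, by simpa [δ] using huniv⟩ (fun n W =>
      ⟨unmatched W (A n ∩ W) (y n W), (hnext n W).measurableSet, (hnext n W).hallOn,
        hδ n ▸ (hnext n W).expandsOn.mono (hmono n.le_succ)⟩) n
  exact ⟨fun n => (V n).1, fun n => y n (V n), rfl, fun n => rfl, fun n => (V n).2.measurableSet,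
    fun n => hy n (V n), fun n => hedge n (V n)⟩

theorem exists_borel_matching_of_monotone (hbip : G.IsBipartiteWith B₀ B₁)
    (hcover : B₀ ∪ B₁ = Set.univ) (hG : MeasurableSet {p : X × X | G.Adj p.1 p.2})
    {r : ℕ → ℕ} (hr : ∀ n, r n ≠ 0) (hmono : Monotone r) {ε : ℝ}
    (hsum : ∀ n, ∑ i ∈ range n, (r i : ℝ)⁻¹ ≤ ε) (huniv : IsUnmatchedStage G ε (r 0) Set.univ)
    {A : ℕ → Set X} (hA : ∀ n, MeasurableSet (A n)) (hAcover : ⋃ n, A n = Set.univ)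
    (hsep : ∀ n, EdistSeparated G (4 * r n) (A n)) :
    ∃ M : Set (X × X), MeasurableSet M ∧ IsPerfectMatchingRel G M := by
  obtain ⟨V, y, hzero, hsucc, hV, hy, hedge⟩ :=
    exists_greedy_sequence hbip hcover hG hr hmono hsum huniv hA hAcover hsep
  have hsub : ∀ n, A n ∩ V n ∪ y n '' (A n ∩ V n) ⊆ V n := fun n =>
    Set.union_subset Set.inter_subset_right
      (Set.image_subset_iff.2 fun x hx => (hedge n x hx.2).mem)
  have hleave : ∀ x, ∃ n, x ∉ V n := fun x => by
    obtain ⟨n, hxA⟩ := Set.mem_iUnion.1 (hAcover ▸ Set.mem_univ x)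
    refine ⟨n + 1, fun hx => ?_⟩
    rw [hsucc] at hx
    exact hx.2 (.inl ⟨hxA, hx.1⟩)
  refine ⟨⋃ n, stageMatching (A n ∩ V n) (y n),
    .iUnion fun n => measurableSet_stageMatching ((hA n).inter (hV n)) (hy n),
    isPerfectMatchingRel_iUnion_stageMatching (fun n => ?_) (fun n x hx => (hedge n x hx.2).adj)
      fun x => existsUnique_mem_of_sdiff_succ hzero hsucc hsub (hleave x)⟩
  exact (hsep n).mono (by have := hr n; omega) Set.inter_subset_left

end Greedy

theorem finite_setOf_le_of_summable_inv {r : ℕ → ℕ} (hr : ∀ n, r n ≠ 0)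
    (hsum : Summable fun n => (r n : ℝ)⁻¹) (a : ℕ) : {n | r n ≤ a}.Finite := by
  have hsmall : ∀ᶠ n in Filter.cofinite, (r n : ℝ)⁻¹ < (a + 1 : ℝ)⁻¹ :=
    hsum.tendsto_cofinite_zero.eventually_lt_const (by positivity)
  refine (Filter.eventually_cofinite.1 hsmall).subset fun n hn => not_lt.2 ?_
  have : 0 < (r n : ℝ) := by exact_mod_cast Nat.pos_of_ne_zero (hr n)
  have : (r n : ℝ) ≤ a := by exact_mod_cast hn
  exact inv_anti₀ ‹_› (by linarith)

theorem borel_matching_of_sparse_decomposition_general {X : Type*} [MeasurableSpace X]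
    [StandardBorelSpace X] (G : SimpleGraph X)
    (hGBorel : MeasurableSet {p : X × X | G.Adj p.1 p.2})
    (hlocfin : ∀ x : X, (G.neighborSet x).Finite)
    (B₀ B₁ : Set X) (hcover : B₀ ∪ B₁ = Set.univ) (hbip : G.IsBipartiteWith B₀ B₁)
    (ε : ℝ) (r : ℕ → ℕ) (hr : ∀ n, r n ≠ 0) (hsummable : Summable fun n => (r n : ℝ)⁻¹)
    (hsum : ∑' n, (r n : ℝ)⁻¹ ≤ ε)
    (hHall : ∀ F : Finset X, ((F : Set X) ⊆ B₀ ∨ (F : Set X) ⊆ B₁) →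
      (1 + ε) * (F.card : ℝ) ≤ ((graphNbhd G (F : Set X)).ncard : ℝ))
    (A : ℕ → Set X) (hABorel : ∀ n, MeasurableSet (A n)) (hAcover : (⋃ n, A n) = Set.univ)
    (hAspread : ∀ n, EdistSeparated G (4 * r n) (A n)) :
    ∃ M : Set (X × X), MeasurableSet M ∧ IsPerfectMatchingRel G M := by
  let _ : G.LocallyFinite := fun x => (hlocfin x).fintype
  obtain ⟨σ, hσ⟩ := exists_equiv_monotone_comp (finite_setOf_le_of_summable_inv hr hsummable)
  have hε : 0 ≤ ε := (tsum_nonneg fun n => by positivity).trans hsum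
  have hpartial : ∀ n, ∑ i ∈ range n, ((r ∘ σ) i : ℝ)⁻¹ ≤ ε := fun n =>
    calc ∑ i ∈ range n, ((r ∘ σ) i : ℝ)⁻¹ ≤ ∑' i, (r (σ i) : ℝ)⁻¹ :=
          (σ.summable_iff.2 hsummable).sum_le_tsum _ fun i _ => by positivity
      _ = ∑' n, (r n : ℝ)⁻¹ := σ.tsum_eq fun n => (r n : ℝ)⁻¹
      _ ≤ ε := hsum
  exact exists_borel_matching_of_monotone hbip hcover hGBorel (fun n => hr (σ n)) hσ hpartial
    (isUnmatchedStage_univ hbip hcover hε _ hHall) (fun n => hABorel (σ n))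
    ((σ.surjective.iUnion_comp A).trans hAcover) fun n => hAspread (σ n)

theorem inv_natDiv_four_le {m : ℕ} (hm : 4 ≤ m) : ((m / 4 : ℕ) : ℝ)⁻¹ ≤ 8 / m := by
  have hpos : 0 < ((m / 4 : ℕ) : ℝ) := by exact_mod_cast Nat.div_pos hm (by norm_num)
  have hle : (m : ℝ) ≤ 8 * (m / 4 : ℕ) := by exact_mod_cast (by omega : m ≤ 8 * (m / 4))
  have hm0 : (0 : ℝ) < m := by exact_mod_cast (by omega : 0 < m)
  rw [inv_eq_one_div, div_le_div_iff₀ hpos hm0]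
  linarith

end

/-- **(Marks–Unger, proof of Theorem 1.3.)** Suppose `G` is a locally finite bipartite Borel
graph on a Polish space `X` with bipartition `{B₀, B₁}` satisfying `Hall_{ε,1}` for some
`ε > 0`, and there is `f : ℕ → ℕ` with `f n ≥ 8` and `Σₙ 8 / f n < ε` such that `X` is the
union of Borel sets `Aₙ` in which distinct points have `G`-distance greater than `f n`
(i.e., every `G`-walk between them has length greater than `f n`). Then `G` has a Borel
perfect matching. -/
theorem borel_matching_of_sparse_decomposition {X : Type*} [TopologicalSpace X] [PolishSpace X]
    [MeasurableSpace X] [BorelSpace X]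
    (G : SimpleGraph X)
    (hGBorel : MeasurableSet {p : X × X | G.Adj p.1 p.2})
    (hlocfin : ∀ x : X, (G.neighborSet x).Finite)
    (B₀ B₁ : Set X) (hcover : B₀ ∪ B₁ = Set.univ) (hdisj : Disjoint B₀ B₁)
    (hbip : ∀ x y : X, G.Adj x y → (x ∈ B₀ ∧ y ∈ B₁) ∨ (x ∈ B₁ ∧ y ∈ B₀))
    (ε : ℝ) (hε : 0 < ε)
    (f : ℕ → ℕ) (hf8 : ∀ n, 8 ≤ f n)
    (hfsummable : Summable (fun n => 8 / (f n : ℝ)))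
    (hfsum : (∑' n, 8 / (f n : ℝ)) < ε)
    (hHall : ∀ F : Finset X, ((F : Set X) ⊆ B₀ ∨ (F : Set X) ⊆ B₁) →
      (1 + ε) * (F.card : ℝ) ≤ ((graphNbhd G (F : Set X)).ncard : ℝ))
    (A : ℕ → Set X)
    (hABorel : ∀ n, MeasurableSet (A n))
    (hAcover : (⋃ n, A n) = Set.univ)
    (hAspread : ∀ n, ∀ x ∈ A n, ∀ y ∈ A n, x ≠ y → ∀ p : G.Walk x y, f n < p.length) :
    ∃ M : Set (X × X), MeasurableSet M ∧ IsPerfectMatchingRel G M := by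
  have hinv : ∀ n, ((f n / 4 : ℕ) : ℝ)⁻¹ ≤ 8 / f n := fun n =>
    inv_natDiv_four_le (by have := hf8 n; omega)
  have hsummable : Summable fun n => ((f n / 4 : ℕ) : ℝ)⁻¹ :=
    .of_nonneg_of_le (fun n => by positivity) hinv hfsummable
  exact borel_matching_of_sparse_decomposition_general G hGBorel hlocfin B₀ B₁ hcover
    ⟨hdisj, hbip⟩ ε (fun n => f n / 4) (fun n => by have := hf8 n; omega) hsummable
    ((hsummable.tsum_le_tsum hinv hfsummable).trans hfsum.le) hHall A hABorel hAcover fun n =>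
      (edistSeparated_iff_forall_walk.2 (hAspread n)).mono (Nat.mul_div_le _ _) subset_rfl
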